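/- arXiv:1605.06429 — 2 statements merged into one kernel-verified Lean document; each statement's English description precedes it below -/
import Mathlib

section
/- First-order expansion of the indifference ask price: if p : (0,ψ₀) → ℝ satisfies U(x₀) = v(x₀ + p(ψ) − V̄, ψ) for all ψ ∈ (0,ψ₀) and p(ψ) → V̄ as ψ ↓ 0, then p(ψ) = V̄ + w̃ ψ + o(ψ) as ψ ↓ 0, i.e. (p(ψ) − V̄ − w̃ψ)/ψ → 0 as ψ ↓ 0. -/
open Set Filter

/-!
Along `y ψ = x₀ + p ψ - V̄ → x₀`, the expansion of `v` turns the indifference equation into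
`U (y ψ) - U x₀ = U' x₀ * w̃ * ψ + o(ψ)`. Since `U' x₀ ≠ 0`, the increment `y ψ - x₀` is bounded by
a multiple of `U (y ψ) - U x₀`, hence is `O(ψ)`, so the remainder `o(y ψ - x₀)` in the linearization
of `U` at `x₀` is itself `o(ψ)`. Dividing by `U' x₀` gives `y ψ - x₀ = w̃ * ψ + o(ψ)`.
-/

open Topology Asymptotics

section FirstOrderInversion

variable {α 𝕜 E F G : Type*} [NontriviallyNormedField 𝕜] [NormedAddCommGroup E] [NormedSpace 𝕜 E]
  [NormedAddCommGroup F] [NormedSpace 𝕜 F] [SeminormedAddCommGroup G] {l : Filter α}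

theorem isLittleO_sub_sub_of_hasFDerivAt {f : E → F} {f' : E →L[𝕜] F} {x : E}
    {y u : α → E} {g : α → G} (hf : HasFDerivAt f f' x) (hf' : IsInducing f')
    (hy : Tendsto y l (𝓝 x)) (hu : u =O[l] g)
    (h : (fun t => f (y t) - f x - f' (u t)) =o[l] g) :
    (fun t => y t - x - u t) =o[l] g := by
  have himage : (fun t => f (y t) - f x) =O[l] g := by
    simpa using h.isBigO.add ((f'.isBigO_comp u l).trans hu)
  have hincrement : (fun t => y t - x) =O[l] g :=
    ((hf.isTheta_sub hf').isBigO_symm.comp_tendsto hy).trans himage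
  have hremainder : (fun t => f (y t) - f x - f' (y t - x)) =o[l] g :=
    (hf.isLittleO.comp_tendsto hy).trans_isBigO hincrement
  have hlinear : (fun t => f' (y t - x - u t)) =o[l] g :=
    (h.sub hremainder).congr_left fun t => by rw [map_sub f' (y t - x)]; abel
  exact (f'.isThetaTVS_comp hf').isTheta.isBigO_symm.trans_isLittleO hlinear

theorem isLittleO_sub_sub_of_hasDerivAt {f : 𝕜 → 𝕜} {f' x : 𝕜} {y u : α → 𝕜} {g : α → G}
    (hf : HasDerivAt f f' x) (hf' : f' ≠ 0) (hy : Tendsto y l (𝓝 x)) (hu : u =O[l] g)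
    (h : (fun t => f (y t) - f x - f' * u t) =o[l] g) :
    (fun t => y t - x - u t) =o[l] g :=
  isLittleO_sub_sub_of_hasFDerivAt (hf.hasFDerivAt_equiv hf')
    (ContinuousLinearEquiv.unitsEquivAut 𝕜 (Units.mk0 f' hf')).toHomeomorph.isInducing hy hu
    (by simpa [mul_comm] using h)

end FirstOrderInversion

theorem isLittleO_prod_nhdsGT_of_forall_exists {X E : Type*} [Norm E]
    {l : Filter X} {s : Set X} {r : X → ℝ → E} {ψ₀ : ℝ} (hs : s ∈ l) (hψ₀ : 0 < ψ₀)
    (hr : ∀ δ > (0 : ℝ), ∃ η > (0 : ℝ), ∀ ψ : ℝ, 0 < ψ → ψ < η → ψ < ψ₀ →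
      ∀ y ∈ s, ‖r y ψ‖ ≤ δ * ψ) :
    (fun z : X × ℝ => r z.1 z.2) =o[l ×ˢ 𝓝[>] 0] Prod.snd := by
  refine IsLittleO.of_bound fun δ hδ => ?_
  obtain ⟨η, hη, hbound⟩ := hr δ hδ
  filter_upwards [prod_mem_prod hs (Ioo_mem_nhdsGT (lt_min hη hψ₀))]
  rintro ⟨y, ψ⟩ ⟨hy, hψ, hψ_lt⟩
  obtain ⟨hψη, hψψ₀⟩ := lt_min_iff.mp hψ_lt
  simpa only [Real.norm_of_nonneg hψ.le] using hbound ψ hψ hψη hψψ₀ y hy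

theorem ask_price_expansion_general {U D p : ℝ → ℝ} {v : ℝ → ℝ → ℝ} {U' x₀ Vb w : ℝ}
    (hU : HasDerivAt U U' x₀) (hU' : U' ≠ 0) (hD : Tendsto D (𝓝 x₀) (𝓝 (U' * w)))
    (hv : (fun z : ℝ × ℝ => v z.1 z.2 - (U z.1 - D z.1 * z.2)) =o[𝓝 x₀ ×ˢ 𝓝[>] 0] Prod.snd)
    (hp : ∀ᶠ ψ in 𝓝[>] 0, U x₀ = v (x₀ + p ψ - Vb) ψ) (hplim : Tendsto p (𝓝[>] 0) (𝓝 Vb)) :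
    (fun ψ => p ψ - Vb - w * ψ) =o[𝓝[>] 0] fun ψ => ψ := by
  let y : ℝ → ℝ := fun ψ => x₀ + p ψ - Vb
  have hy : Tendsto y (𝓝[>] 0) (𝓝 x₀) := by
    simpa using (hplim.const_add x₀).sub_const Vb
  have hremainder : (fun ψ => v (y ψ) ψ - (U (y ψ) - D (y ψ) * ψ)) =o[𝓝[>] 0] fun ψ => ψ :=
    hv.comp_tendsto (hy.prodMk tendsto_id)
  have hcoeff : (fun ψ => (D (y ψ) - U' * w) * ψ) =o[𝓝[>] 0] fun ψ => ψ := by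
    have hD_sub : (fun ψ => D (y ψ) - U' * w) =o[𝓝[>] 0] fun _ => (1 : ℝ) :=
      (isLittleO_one_iff ℝ).mpr (tendsto_sub_nhds_zero_iff.mpr (hD.comp hy))
    simpa only [one_mul] using hD_sub.mul_isBigO (isBigO_refl (fun ψ : ℝ => ψ) _)
  have hincrement : (fun ψ => U (y ψ) - U x₀ - U' * (w * ψ)) =o[𝓝[>] 0] fun ψ => ψ := by
    refine (hcoeff.sub hremainder).congr' ?_ .rfl
    filter_upwards [hp] with ψ hψ
    rw [← hψ]
    ring
  refine (isLittleO_sub_sub_of_hasDerivAt hU hU' hy (isBigO_const_mul_self w _ _)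
    hincrement).congr_left fun ψ => ?_
  simp only [y]
  ring

/-- **First-order expansion of the indifference ask price.**
Let `U` be `C¹` with `U' > 0`, and suppose the value function `v` admits the uniform
first-order expansion `v(y,ψ) = U(y) - U'(y) W(y) ψ + o(ψ)` on an open interval `I ∋ x₀`
with `W` continuous and `W(x₀) = w̃`.  If `p : (0,ψ₀) → ℝ` satisfies
`U(x₀) = v(x₀ + p(ψ) - V̄, ψ)` and `p(ψ) → V̄` as `ψ ↓ 0`, then
`p(ψ) = V̄ + w̃ ψ + o(ψ)`, i.e. `(p(ψ) - V̄ - w̃ ψ)/ψ → 0` as `ψ ↓ 0`. -/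
theorem ask_price_expansion
    (U U1 : ℝ → ℝ) (hU1 : ∀ y, HasDerivAt U (U1 y) y)
    (hU1cont : Continuous U1) (hU1pos : ∀ y, 0 < U1 y)
    (x₀ Vb wt ψ₀ : ℝ) (hψ₀ : 0 < ψ₀)
    (v : ℝ → ℝ → ℝ)
    (a b : ℝ) (hax : a < x₀) (hxb : x₀ < b)
    (W : ℝ → ℝ) (hW : ContinuousOn W (Ioo a b)) (hWx₀ : W x₀ = wt)
    (hv : ∀ δ > (0:ℝ), ∃ η > (0:ℝ), ∀ ψ : ℝ, 0 < ψ → ψ < η → ψ < ψ₀ →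
      ∀ y ∈ Ioo a b, |v y ψ - (U y - U1 y * W y * ψ)| ≤ δ * ψ)
    (p : ℝ → ℝ)
    (hp : ∀ ψ ∈ Ioo (0:ℝ) ψ₀, U x₀ = v (x₀ + p ψ - Vb) ψ)
    (hplim : Tendsto p (nhdsWithin 0 (Ioi 0)) (nhds Vb)) :
    Tendsto (fun ψ => (p ψ - Vb - wt * ψ) / ψ) (nhdsWithin 0 (Ioi 0)) (nhds 0) := by
  have hI : Ioo a b ∈ 𝓝 x₀ := Ioo_mem_nhds hax hxb
  have hexpansion := isLittleO_prod_nhdsGT_of_forall_exists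
    (r := fun y ψ => v y ψ - (U y - U1 y * W y * ψ)) hI hψ₀ hv
  have hprice := ask_price_expansion_general (hU1 x₀) (hU1pos x₀).ne'
    (hU1cont.continuousAt.mul (hW.continuousAt hI)) hexpansion
    (eventually_of_mem (Ioo_mem_nhdsGT hψ₀) hp) hplim
  exact hWx₀ ▸ hprice.tendsto_div_nhds_zero
end

section
/- First-order expansion of the indifference bid price: if p : (0,ψ₀) → ℝ satisfies U(x₀) = v(x₀ − p(ψ) + V̄, ψ) for all ψ ∈ (0,ψ₀) and p(ψ) → V̄ as ψ ↓ 0, then p(ψ) = V̄ − w̃ ψ + o(ψ) as ψ ↓ 0, i.e. (p(ψ) − V̄ + w̃ψ)/ψ → 0 as ψ ↓ 0; in particular, together with the corresponding ask price p_a satisfying U(x₀) = v(x₀ + p_a(ψ) − V̄, ψ) and p_a(ψ) → V̄, the bid–ask spread satisfies p_a(ψ) − p(ψ) = 2 w̃ ψ + o(ψ). -/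
open Set Filter

/-!
Both prices are read off from wealth levels at which the agent is indifferent: `x₀ - p ψ + Vb` and
`x₀ + pa ψ - Vb` solve `v (y ψ) ψ = U x₀` and tend to `x₀`. Near `x₀` the loss coefficient
`U' W` may be replaced by its value `U'(x₀) w̃` at a cost of `o(ψ)`, so
`U (y ψ) - U x₀ = U'(x₀) w̃ ψ + o(ψ)`. As `U'(x₀) ≠ 0`, this relation can be inverted to
`y ψ = x₀ + w̃ ψ + o(ψ)`.
-/

open Asymptotics
open scoped Topology

section LittleO

variable {α X 𝕜 E F : Type*} [NontriviallyNormedField 𝕜]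
  [NormedAddCommGroup E] [NormedSpace 𝕜 E] [NormedAddCommGroup F]

lemma isLittleO_sub_of_hasDerivAt {f : 𝕜 → E} {f' : E} {x₀ : 𝕜} {l : Filter α} {y d : α → 𝕜}
    {s : α → F} (hf : HasDerivAt f f' x₀) (hf' : f' ≠ 0) (hy : Tendsto y l (𝓝 x₀))
    (hd : d =O[l] s) (hfy : (fun t => f (y t) - f x₀ - d t • f') =o[l] s) :
    (fun t => y t - x₀ - d t) =o[l] s := by
  have hd_smul : (fun t => d t • f') =O[l] s :=
    ((ContinuousLinearMap.toSpanSingleton 𝕜 f').isBigO_comp d l).trans hd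
  have hf_sub : (fun t => f (y t) - f x₀) =O[l] s := by
    simpa only [sub_add_cancel] using hfy.isBigO.add hd_smul
  -- As `f' ≠ 0`, the linearization error is `o` of the increment of `f`, which is `O(s)`.
  have hlin : (fun t => (y t - x₀) • f' - (f (y t) - f x₀)) =o[l] s :=
    (hf.isEquivalent_sub hf').symm.isLittleO.comp_tendsto (hy.prodMk tendsto_const_pure)
      |>.trans_isBigO hf_sub
  have hsmul : (fun t => (y t - x₀ - d t) • f') =o[l] s :=
    (hlin.add hfy).congr_left fun t => by rw [sub_smul _ (d t)]; abel
  simpa only [norm_smul, mul_comm _ ‖f'‖, isLittleO_norm_left,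
    isLittleO_const_mul_left_iff (norm_ne_zero_iff.2 hf')] using hsmul.norm_left

lemma isLittleO_smul_sub_of_continuousAt [TopologicalSpace X] {g : X → E} {x₀ : X}
    (hg : ContinuousAt g x₀) (l : Filter 𝕜) :
    (fun q : X × 𝕜 => q.2 • (g q.1 - g x₀)) =o[𝓝 x₀ ×ˢ l] Prod.snd := by
  have hg_sub : (fun q : X × 𝕜 => g q.1 - g x₀) =o[𝓝 x₀ ×ˢ l] fun _ => (1 : 𝕜) :=
    (isLittleO_one_iff 𝕜).2 (tendsto_sub_nhds_zero_iff.2 (hg.tendsto.comp tendsto_fst))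
  simpa only [smul_eq_mul, mul_one] using (isBigO_refl Prod.snd _).smul_isLittleO hg_sub

lemma isLittleO_prod_nhdsGT_of_uniform {l : Filter X} {s : Set X} (hs : s ∈ l) {ψ₀ : ℝ}
    (hψ₀ : 0 < ψ₀) {r : X → ℝ → F}
    (hr : ∀ δ > (0 : ℝ), ∃ η > (0 : ℝ), ∀ ψ : ℝ, 0 < ψ → ψ < η → ψ < ψ₀ →
      ∀ y ∈ s, ‖r y ψ‖ ≤ δ * ψ) :
    (fun q : X × ℝ => r q.1 q.2) =o[l ×ˢ 𝓝[>] 0] Prod.snd := by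
  refine .of_bound fun δ hδ => ?_
  obtain ⟨η, hη, hr⟩ := hr δ hδ
  filter_upwards [prod_mem_prod hs (Ioo_mem_nhdsGT (lt_min hη hψ₀))]
    with ⟨y, ψ⟩ ⟨hy, hψ, hψ_lt⟩
  rw [Real.norm_of_nonneg hψ.le]
  exact hr ψ hψ (hψ_lt.trans_le (min_le_left _ _)) (hψ_lt.trans_le (min_le_right _ _)) y hy

lemma isLittleO_expansion_of_uniform [TopologicalSpace X] [NormedSpace ℝ F] {x₀ : X} {s : Set X}
    (hs : s ∈ 𝓝 x₀) {ψ₀ : ℝ} (hψ₀ : 0 < ψ₀) {U g : X → F} (hg : ContinuousAt g x₀)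
    {v : X → ℝ → F}
    (hv : ∀ δ > (0 : ℝ), ∃ η > (0 : ℝ), ∀ ψ : ℝ, 0 < ψ → ψ < η → ψ < ψ₀ →
      ∀ y ∈ s, ‖v y ψ - (U y - ψ • g y)‖ ≤ δ * ψ) :
    (fun q : X × ℝ => v q.1 q.2 - (U q.1 - q.2 • g x₀)) =o[𝓝 x₀ ×ˢ 𝓝[>] 0] Prod.snd :=
  ((isLittleO_prod_nhdsGT_of_uniform hs hψ₀ hv).sub
    (isLittleO_smul_sub_of_continuousAt hg _)).congr_left fun q => by rw [smul_sub]; abel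

end LittleO

section Indifference

variable {𝕜 E : Type*} [NontriviallyNormedField 𝕜] [NormedAddCommGroup E] [NormedSpace 𝕜 E]
  {U : 𝕜 → E} {U' : E} {x₀ w : 𝕜} {l : Filter 𝕜} {v : 𝕜 → 𝕜 → E}

lemma indifference_wealth_expansion (hU : HasDerivAt U U' x₀) (hU' : U' ≠ 0)
    (hv : (fun q : 𝕜 × 𝕜 => v q.1 q.2 - (U q.1 - q.2 • w • U')) =o[𝓝 x₀ ×ˢ l] Prod.snd)
    {y : 𝕜 → 𝕜} (hy : ∀ᶠ ψ in l, U x₀ = v (y ψ) ψ) (hy_lim : Tendsto y l (𝓝 x₀)) :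
    (fun ψ => y ψ - x₀ - w * ψ) =o[l] fun ψ => ψ := by
  have hv_y : (fun ψ => v (y ψ) ψ - (U (y ψ) - ψ • w • U')) =o[l] fun ψ => ψ :=
    hv.comp_tendsto (hy_lim.prodMk tendsto_id)
  refine isLittleO_sub_of_hasDerivAt hU hU' hy_lim (isBigO_const_mul_self w _ l) ?_
  refine hv_y.neg_left.congr' (hy.mono fun ψ hψ => ?_) .rfl
  simp only [hψ, mul_comm w, mul_smul]
  abel

theorem bid_price_expansion_general (hU : HasDerivAt U U' x₀) (hU' : U' ≠ 0)
    (hv : (fun q : 𝕜 × 𝕜 => v q.1 q.2 - (U q.1 - q.2 • w • U')) =o[𝓝 x₀ ×ˢ l] Prod.snd)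
    {V : 𝕜} {p pa : 𝕜 → 𝕜}
    (hp : ∀ᶠ ψ in l, U x₀ = v (x₀ - p ψ + V) ψ) (hp_lim : Tendsto p l (𝓝 V))
    (hpa : ∀ᶠ ψ in l, U x₀ = v (x₀ + pa ψ - V) ψ) (hpa_lim : Tendsto pa l (𝓝 V)) :
    ((fun ψ => p ψ - V + w * ψ) =o[l] fun ψ => ψ) ∧
      (fun ψ => pa ψ - p ψ - 2 * w * ψ) =o[l] fun ψ => ψ := by
  have hbid := indifference_wealth_expansion hU hU' hv hp <| by
    simpa only [sub_add_cancel] using (hp_lim.const_sub x₀).add_const V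
  have hask := indifference_wealth_expansion hU hU' hv hpa <| by
    simpa only [add_sub_cancel_right] using (hpa_lim.const_add x₀).sub_const V
  exact ⟨hbid.neg_left.congr_left fun ψ => by ring, (hbid.add hask).congr_left fun ψ => by ring⟩

end Indifference

/-- **First-order expansion of the indifference bid price (and of the bid–ask spread).**
Let `U` be `C¹` with `U' > 0`, and suppose the value function `v` admits the uniform
first-order expansion `v(y,ψ) = U(y) - U'(y) W(y) ψ + o(ψ)` on an open interval `I ∋ x₀`
with `W` continuous and `W(x₀) = w̃`.  If `p : (0,ψ₀) → ℝ` satisfies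
`U(x₀) = v(x₀ - p(ψ) + V̄, ψ)` and `p(ψ) → V̄` as `ψ ↓ 0`, then
`p(ψ) = V̄ - w̃ ψ + o(ψ)`; moreover, together with the ask price `p_a` satisfying
`U(x₀) = v(x₀ + p_a(ψ) - V̄, ψ)` and `p_a(ψ) → V̄`, the bid–ask spread satisfies
`p_a(ψ) - p(ψ) = 2 w̃ ψ + o(ψ)`. -/
theorem bid_price_expansion
    (U U1 : ℝ → ℝ) (hU1 : ∀ y, HasDerivAt U (U1 y) y)
    (hU1cont : Continuous U1) (hU1pos : ∀ y, 0 < U1 y)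
    (x₀ Vb wt ψ₀ : ℝ) (hψ₀ : 0 < ψ₀)
    (v : ℝ → ℝ → ℝ)
    (a b : ℝ) (hax : a < x₀) (hxb : x₀ < b)
    (W : ℝ → ℝ) (hW : ContinuousOn W (Ioo a b)) (hWx₀ : W x₀ = wt)
    (hv : ∀ δ > (0:ℝ), ∃ η > (0:ℝ), ∀ ψ : ℝ, 0 < ψ → ψ < η → ψ < ψ₀ →
      ∀ y ∈ Ioo a b, |v y ψ - (U y - U1 y * W y * ψ)| ≤ δ * ψ)
    (p pa : ℝ → ℝ)
    (hp : ∀ ψ ∈ Ioo (0:ℝ) ψ₀, U x₀ = v (x₀ - p ψ + Vb) ψ)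
    (hplim : Tendsto p (nhdsWithin 0 (Ioi 0)) (nhds Vb))
    (hpa : ∀ ψ ∈ Ioo (0:ℝ) ψ₀, U x₀ = v (x₀ + pa ψ - Vb) ψ)
    (hpalim : Tendsto pa (nhdsWithin 0 (Ioi 0)) (nhds Vb)) :
    Tendsto (fun ψ => (p ψ - Vb + wt * ψ) / ψ) (nhdsWithin 0 (Ioi 0)) (nhds 0) ∧
    Tendsto (fun ψ => (pa ψ - p ψ - 2 * wt * ψ) / ψ) (nhdsWithin 0 (Ioi 0)) (nhds 0) := by
  have hg : ContinuousAt (fun y => W y • U1 y) x₀ :=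
    (hW.continuousAt (Ioo_mem_nhds hax hxb)).smul hU1cont.continuousAt
  have hv_x₀ := isLittleO_expansion_of_uniform (Ioo_mem_nhds hax hxb) hψ₀ hg (U := U) (v := v) <| by
    simpa only [Real.norm_eq_abs, smul_eq_mul, mul_comm, mul_left_comm, mul_assoc] using hv
  rw [hWx₀] at hv_x₀
  exact (bid_price_expansion_general (hU1 x₀) (hU1pos x₀).ne' hv_x₀
    (eventually_of_mem (Ioo_mem_nhdsGT hψ₀) hp) hplim
    (eventually_of_mem (Ioo_mem_nhdsGT hψ₀) hpa) hpalim).imp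
    IsLittleO.tendsto_div_nhds_zero IsLittleO.tendsto_div_nhds_zero
end
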